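/- arXiv:2201.04315 — 2 statements merged into one kernel-verified Lean document; each statement's English description precedes it below -/
import Mathlib

section
/- Let 𝒫 be any class of probability distributions on a measurable space 𝒳. Then for every even integer n ≥ 2 and every integer m ≥ 0, the minimax sample-amplification error satisfies ε*(𝒫,n,m) ≤ sqrt( (m²/n) · r_{χ²}(𝒫, n/2) ). -/
open MeasureTheory ProbabilityTheory
open scoped ENNReal NNReal Classical

/-- Total variation distance between two measures: `sup_A |P(A) - Q(A)|`. -/
noncomputable def tvDist {X : Type*} [MeasurableSpace X] (μ ν : Measure X) : ℝ :=
  ⨆ A : {s : Set X // MeasurableSet s}, |(μ A).toReal - (ν A).toReal|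

/-- Minimax sample amplification error `ε*(𝒫, n, m)` for the family `(P θ)_θ`. -/
noncomputable def ampErr {X Θ : Type*} [MeasurableSpace X] (P : Θ → Measure X)
    (n m : ℕ) : ℝ :=
  ⨅ T : {T : Kernel (Fin n → X) (Fin (n + m) → X) // IsMarkovKernel T},
    ⨆ θ : Θ, tvDist (Measure.pi fun _ : Fin (n + m) => P θ)
      ((Measure.pi fun _ : Fin n => P θ).bind T.1)

/-- The chi-squared divergence `χ²(P‖Q) = ∫ (dP/dQ - 1)² dQ` if `P ≪ Q`, `∞` otherwise. -/
noncomputable def chiSqDiv {X : Type*} [MeasurableSpace X] (P Q : Measure X) : ℝ≥0∞ :=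
  if P ≪ Q then ∫⁻ x, ENNReal.ofReal (((P.rnDeriv Q x).toReal - 1) ^ 2) ∂Q else ⊤

/-- The `χ²`-estimation error `r_{χ²}(𝒫, n)`: the minimax risk of estimating the
distribution under expected chi-squared divergence from `n` i.i.d. samples, where the
infimum is over measurable (randomized) estimators, i.e. Markov kernels from samples
to distributions. -/
noncomputable def chiSqRisk {X Θ : Type*} [MeasurableSpace X] (P : Θ → Measure X)
    (n : ℕ) : ℝ≥0∞ :=
  ⨅ est : {κ : Kernel (Fin n → X) X // IsMarkovKernel κ},
    ⨆ θ : Θ, ∫⁻ x, chiSqDiv ((est.1) x) (P θ) ∂(Measure.pi fun _ : Fin n => P θ)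

/-
Use one half of the sample to train an estimator `Q` of `P`, and insert points drawn from `Q` into
the other half, one at a time and at a uniformly random position. If `x ∈ X^(N+1)` arises from
`Q ⊗ P^N` by one such insertion, its density with respect to `P^(N+1)` is the sample mean of
`dQ/dP`, so that averaging over the position divides the `χ²`-divergence by `N + 1`. Since
`4 TV² ≤ χ²`, Jensen's inequality over the training half bounds the error of one insertion by
`sqrt (E χ²(Q‖P) / (4 (N + 1)))`, and by the data-processing and triangle inequalities the errors
of the `m` insertions add up.
-/

section TotalVariation

variable {X Y : Type*} [MeasurableSpace X] [MeasurableSpace Y] {μ ν ρ : Measure X}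

theorem tvDist_nonneg (μ ν : Measure X) : 0 ≤ tvDist μ ν :=
  Real.iSup_nonneg fun _ ↦ abs_nonneg _

theorem tvDist_self (μ : Measure X) : tvDist μ μ = 0 := by
  simp [tvDist]

theorem tvDist_comm (μ ν : Measure X) : tvDist μ ν = tvDist ν μ := by
  simp only [tvDist, abs_sub_comm]

theorem tvDist_le {c : ℝ} (h : ∀ A, MeasurableSet A → |μ.real A - ν.real A| ≤ c) :
    tvDist μ ν ≤ c :=
  have : Nonempty {s : Set X // MeasurableSet s} := ⟨∅, .empty⟩
  ciSup_le fun A ↦ h A A.2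

theorem abs_measureReal_sub_le_tvDist [IsFiniteMeasure μ] [IsFiniteMeasure ν] {A : Set X}
    (hA : MeasurableSet A) : |μ.real A - ν.real A| ≤ tvDist μ ν := by
  refine le_ciSup (f := fun A : {s : Set X // MeasurableSet s} ↦ |μ.real A - ν.real A|)
    ⟨max (μ.real .univ) (ν.real .univ), ?_⟩ ⟨A, hA⟩
  rintro _ ⟨B, rfl⟩
  exact abs_sub_le_of_nonneg_of_le
    measureReal_nonneg ((measureReal_mono B.1.subset_univ).trans (le_max_left _ _))
    measureReal_nonneg ((measureReal_mono B.1.subset_univ).trans (le_max_right _ _))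

theorem tvDist_triangle [IsFiniteMeasure μ] [IsFiniteMeasure ν] [IsFiniteMeasure ρ] :
    tvDist μ ρ ≤ tvDist μ ν + tvDist ν ρ :=
  tvDist_le fun _ hA ↦ (abs_sub_le _ _ _).trans
    (add_le_add (abs_measureReal_sub_le_tvDist hA) (abs_measureReal_sub_le_tvDist hA))

theorem ofReal_tvDist_sq_le {B : ℝ≥0∞}
    (h : ∀ A, MeasurableSet A → ENNReal.ofReal ((μ.real A - ν.real A) ^ 2) ≤ B) :
    ENNReal.ofReal (tvDist μ ν ^ 2) ≤ B := by
  obtain rfl | hB := eq_or_ne B ⊤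
  · exact le_top
  rw [ENNReal.ofReal_le_iff_le_toReal hB,
    ← Real.le_sqrt (tvDist_nonneg μ ν) ENNReal.toReal_nonneg]
  exact tvDist_le fun A hA ↦ Real.abs_le_sqrt ((ENNReal.ofReal_le_iff_le_toReal hB).1 (h A hA))

theorem abs_integral_sub_le_tvDist [IsFiniteMeasure μ] [IsFiniteMeasure ν] {f : X → ℝ}
    (hf : Measurable f) (hf01 : ∀ x, f x ∈ Set.Icc 0 1) :
    |∫ x, f x ∂μ - ∫ x, f x ∂ν| ≤ tvDist μ ν := by
  have layerCake (ξ : Measure X) [IsFiniteMeasure ξ] :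
      ∫ x, f x ∂ξ = ∫ t in Set.Ioc 0 1, ξ.real {x | t ≤ f x} :=
    (Integrable.of_mem_Icc 0 1 hf.aemeasurable (.of_forall hf01)).integral_eq_integral_Ioc_meas_le
      (.of_forall fun x ↦ (hf01 x).1) (.of_forall fun x ↦ (hf01 x).2)
  have integrableOn_tail (ξ : Measure X) [IsFiniteMeasure ξ] :
      IntegrableOn (fun t ↦ ξ.real {x | t ≤ f x}) (Set.Ioc 0 1) := by
    have hanti : Antitone fun t ↦ ξ.real {x | t ≤ f x} :=
      fun s t hst ↦ measureReal_mono fun x hx ↦ hst.trans hx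
    exact (hanti.antitoneOn _).integrableOn_isCompact (isCompact_Icc (a := 0) (b := 1)) |>.mono_set
      Set.Ioc_subset_Icc_self
  rw [layerCake μ, layerCake ν, ← integral_sub (integrableOn_tail μ) (integrableOn_tail ν)]
  have hgap (t : ℝ) : ‖μ.real {x | t ≤ f x} - ν.real {x | t ≤ f x}‖ ≤ tvDist μ ν :=
    abs_measureReal_sub_le_tvDist (hf measurableSet_Ici)
  simpa using norm_setIntegral_le_of_norm_le_const (μ := volume) (s := Set.Ioc (0 : ℝ) 1)
    (by simp) fun t _ ↦ hgap t

theorem measureReal_comp_eq_integral [SFinite μ] (κ : Kernel X Y) [IsFiniteKernel κ] {A : Set Y}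
    (hA : MeasurableSet A) : (κ ∘ₘ μ).real A = ∫ x, (κ x).real A ∂μ := by
  rw [measureReal_def, Measure.bind_apply hA κ.aemeasurable]
  exact (integral_toReal (κ.measurable_coe hA).aemeasurable
    (.of_forall fun x ↦ measure_lt_top _ _)).symm

theorem tvDist_comp_le [IsFiniteMeasure μ] [IsFiniteMeasure ν] (κ : Kernel X Y)
    [IsMarkovKernel κ] : tvDist (κ ∘ₘ μ) (κ ∘ₘ ν) ≤ tvDist μ ν :=
  tvDist_le fun A hA ↦ by
    rw [measureReal_comp_eq_integral κ hA, measureReal_comp_eq_integral κ hA]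
    exact abs_integral_sub_le_tvDist (κ.measurable_coe hA).ennreal_toReal
      fun x ↦ ⟨measureReal_nonneg, measureReal_le_one⟩

theorem sq_integral_le_integral_sq [IsProbabilityMeasure μ] {f : X → ℝ} (hf : MemLp f 2 μ) :
    (∫ x, f x ∂μ) ^ 2 ≤ ∫ x, f x ^ 2 ∂μ := by
  simpa [variance_eq_sub hf] using variance_nonneg f μ

theorem measureReal_compProd_eq_integral [SFinite μ] (κ : Kernel X Y) [IsFiniteKernel κ]
    {A : Set (X × Y)} (hA : MeasurableSet A) :
    (μ ⊗ₘ κ).real A = ∫ x, (κ x).real (Prod.mk x ⁻¹' A) ∂μ := by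
  rw [measureReal_def, Measure.compProd_apply hA]
  exact (integral_toReal (Kernel.measurable_kernel_prodMk_left hA).aemeasurable
    (.of_forall fun x ↦ measure_lt_top _ _)).symm

theorem ofReal_tvDist_compProd_sq_le [IsProbabilityMeasure μ] (κ η : Kernel X Y)
    [IsMarkovKernel κ] [IsMarkovKernel η] :
    ENNReal.ofReal (tvDist (μ ⊗ₘ κ) (μ ⊗ₘ η) ^ 2) ≤
      ∫⁻ x, ENNReal.ofReal (tvDist (κ x) (η x) ^ 2) ∂μ := by
  refine ofReal_tvDist_sq_le fun A hA ↦ ?_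
  have measurable_section (ξ : Kernel X Y) [IsMarkovKernel ξ] :
      Measurable fun x ↦ (ξ x).real (Prod.mk x ⁻¹' A) :=
    (Kernel.measurable_kernel_prodMk_left hA).ennreal_toReal
  have integrable_section (ξ : Kernel X Y) [IsMarkovKernel ξ] :
      Integrable (fun x ↦ (ξ x).real (Prod.mk x ⁻¹' A)) μ :=
    .of_mem_Icc 0 1 (measurable_section ξ).aemeasurable
      (.of_forall fun x ↦ ⟨measureReal_nonneg, measureReal_le_one⟩)
  set gap : X → ℝ := fun x ↦ (κ x).real (Prod.mk x ⁻¹' A) - (η x).real (Prod.mk x ⁻¹' A)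
  have hgap : MemLp gap 2 μ :=
    .of_bound ((measurable_section κ).sub (measurable_section η)).aestronglyMeasurable 1
      (.of_forall fun x ↦ abs_sub_le_of_nonneg_of_le measureReal_nonneg measureReal_le_one
        measureReal_nonneg measureReal_le_one)
  calc ENNReal.ofReal (((μ ⊗ₘ κ).real A - (μ ⊗ₘ η).real A) ^ 2)
      = ENNReal.ofReal ((∫ x, gap x ∂μ) ^ 2) := by
        rw [measureReal_compProd_eq_integral κ hA, measureReal_compProd_eq_integral η hA,
          integral_sub (integrable_section κ) (integrable_section η)]
    _ ≤ ENNReal.ofReal (∫ x, gap x ^ 2 ∂μ) :=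
        ENNReal.ofReal_le_ofReal (sq_integral_le_integral_sq hgap)
    _ = ∫⁻ x, ENNReal.ofReal (gap x ^ 2) ∂μ :=
        ofReal_integral_eq_lintegral_ofReal hgap.integrable_sq (.of_forall fun _ ↦ sq_nonneg _)
    _ ≤ ∫⁻ x, ENNReal.ofReal (tvDist (κ x) (η x) ^ 2) ∂μ := by
        refine lintegral_mono fun x ↦ ENNReal.ofReal_le_ofReal (sq_le_sq.2 ?_)
        rw [abs_of_nonneg (tvDist_nonneg _ _)]
        exact abs_measureReal_sub_le_tvDist (measurable_prodMk_left hA)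

end TotalVariation

section ChiSquared

variable {X : Type*} [MeasurableSpace X] {P Q : Measure X}

theorem chiSqDiv_eq_evariance [IsProbabilityMeasure P] [IsProbabilityMeasure Q] (hQP : Q ≪ P) :
    chiSqDiv Q P = eVar[fun x ↦ (Q.rnDeriv P x).toReal; P] := by
  rw [chiSqDiv, if_pos hQP, evariance_eq_lintegral_ofReal, Measure.integral_toReal_rnDeriv hQP,
    probReal_univ]

theorem chiSqDiv_withDensity {f : X → ℝ≥0∞} (hf : Measurable f) [IsProbabilityMeasure P]
    [IsProbabilityMeasure (P.withDensity f)] :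
    chiSqDiv (P.withDensity f) P = eVar[fun x ↦ (f x).toReal; P] := by
  rw [chiSqDiv_eq_evariance (withDensity_absolutelyContinuous P f)]
  refine evariance_congr ?_
  filter_upwards [P.rnDeriv_withDensity hf] with x hx
  rw [hx]

theorem measureReal_sub_eq_integral_rnDeriv [IsProbabilityMeasure P] [IsProbabilityMeasure Q]
    (hQP : Q ≪ P) {A : Set X} (hA : MeasurableSet A) (c : ℝ) :
    Q.real A - P.real A = ∫ x, (A.indicator 1 x - c) * ((Q.rnDeriv P x).toReal - 1) ∂P := by
  set r : X → ℝ := fun x ↦ (Q.rnDeriv P x).toReal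
  have hr : Integrable (fun x ↦ r x - 1) P :=
    Measure.integrable_toReal_rnDeriv.sub (integrable_const 1)
  have hmean : ∫ x, (r x - 1) ∂P = 0 := by
    rw [integral_sub Measure.integrable_toReal_rnDeriv (integrable_const 1),
      Measure.integral_toReal_rnDeriv hQP]
    simp
  calc Q.real A - P.real A
      = ∫ x in A, (r x - 1) ∂P - c * ∫ x, (r x - 1) ∂P := by
        rw [hmean, integral_sub Measure.integrable_toReal_rnDeriv.integrableOn
          (integrable_const 1), Measure.setIntegral_toReal_rnDeriv hQP]
        simp
    _ = ∫ x, (A.indicator (fun x ↦ r x - 1) x - c * (r x - 1)) ∂P := by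
        rw [integral_sub (hr.indicator hA) (hr.const_mul c), integral_indicator hA,
          integral_const_mul]
    _ = ∫ x, (A.indicator 1 x - c) * (r x - 1) ∂P := by
        refine integral_congr_ae (.of_forall fun x ↦ ?_)
        by_cases hx : x ∈ A <;> simp [hx, sub_mul]

theorem sq_measureReal_sub_le_variance_rnDeriv [IsProbabilityMeasure P] [IsProbabilityMeasure Q]
    (hQP : Q ≪ P) (hr : MemLp (fun x ↦ (Q.rnDeriv P x).toReal) 2 P) {A : Set X}
    (hA : MeasurableSet A) :
    (Q.real A - P.real A) ^ 2 ≤ Var[fun x ↦ (Q.rnDeriv P x).toReal; P] / 4 := by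
  set r : X → ℝ := fun x ↦ (Q.rnDeriv P x).toReal
  have hrm : Measurable r := (Q.measurable_rnDeriv P).ennreal_toReal
  -- Centring the indicator at `1 / 2` makes its square constant, which saves the factor `4`.
  have hsq (x : X) : ((A.indicator 1 x - 1 / 2) * (r x - 1)) ^ 2 = (r x - 1) ^ 2 / 4 := by
    have hcentred : (A.indicator 1 x - 1 / 2 : ℝ) ^ 2 = 1 / 4 := by
      by_cases hx : x ∈ A <;> norm_num [hx]
    rw [mul_pow, hcentred]
    ring
  have hmem : MemLp (fun x ↦ (A.indicator 1 x - 1 / 2) * (r x - 1)) 2 P := by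
    have hm : Measurable fun x ↦ (A.indicator 1 x - 1 / 2) * (r x - 1) :=
      ((measurable_one.indicator hA).sub_const _).mul (hrm.sub_const 1)
    rw [memLp_two_iff_integrable_sq hm.aestronglyMeasurable]
    simp only [hsq]
    exact (hr.sub (memLp_const 1)).integrable_sq.div_const 4
  calc (Q.real A - P.real A) ^ 2
      = (∫ x, (A.indicator 1 x - 1 / 2) * (r x - 1) ∂P) ^ 2 := by
        rw [measureReal_sub_eq_integral_rnDeriv hQP hA (1 / 2)]
    _ ≤ ∫ x, ((A.indicator 1 x - 1 / 2) * (r x - 1)) ^ 2 ∂P := sq_integral_le_integral_sq hmem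
    _ = Var[r; P] / 4 := by
        rw [variance_eq_integral hrm.aemeasurable, Measure.integral_toReal_rnDeriv hQP,
          probReal_univ]
        simp only [hsq, integral_div]

theorem ofReal_tvDist_sq_le_chiSqDiv [IsProbabilityMeasure P] [IsProbabilityMeasure Q] :
    ENNReal.ofReal (tvDist Q P ^ 2) ≤ chiSqDiv Q P / 4 := by
  by_cases hQP : Q ≪ P
  swap
  · simp [chiSqDiv, hQP, ENNReal.top_div]
  rw [chiSqDiv_eq_evariance hQP]
  by_cases hr : MemLp (fun x ↦ (Q.rnDeriv P x).toReal) 2 P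
  swap
  · simp [evariance_eq_top (Q.measurable_rnDeriv P).ennreal_toReal.aestronglyMeasurable hr,
      ENNReal.top_div]
  refine ofReal_tvDist_sq_le fun A hA ↦ ?_
  rw [← ofReal_variance hr, ← ENNReal.ofReal_ofNat, ← ENNReal.ofReal_div_of_pos (by norm_num)]
  exact ENNReal.ofReal_le_ofReal (sq_measureReal_sub_le_variance_rnDeriv hQP hr hA)

theorem evariance_sampleMean_pi_le {ι : Type*} [Fintype ι] [IsProbabilityMeasure P] {f : X → ℝ}
    (hf : AEStronglyMeasurable f P) :
    eVar[fun x : ι → X ↦ (Fintype.card ι : ℝ)⁻¹ * ∑ i, f (x i); Measure.pi fun _ ↦ P] ≤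
      eVar[f; P] / Fintype.card ι := by
  by_cases hf2 : MemLp f 2 P
  swap
  · rw [evariance_eq_top hf hf2, ENNReal.top_div_of_ne_top (ENNReal.natCast_ne_top _)]
    exact le_top
  obtain _ | _ := isEmpty_or_nonempty ι
  · simp [evariance]
  have hsum : MemLp (∑ i, fun x : ι → X ↦ f (x i)) 2 (Measure.pi fun _ ↦ P) :=
    memLp_finsetSum' _ fun i _ ↦
      hf2.comp_measurePreserving (measurePreserving_eval (fun _ : ι ↦ P) i)
  have hvar := variance_sum_pi (μ := fun _ : ι ↦ P) (X := fun _ ↦ f) fun _ ↦ hf2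
  have hfun : (fun x : ι → X ↦ (Fintype.card ι : ℝ)⁻¹ * ∑ i, f (x i)) =
    fun x ↦ (Fintype.card ι : ℝ)⁻¹ * (∑ i, fun x : ι → X ↦ f (x i)) x := by simp
  have hcard : (0 : ℝ) < Fintype.card ι := mod_cast Fintype.card_pos
  rw [hfun, ← ofReal_variance (hsum.const_mul _), variance_const_mul, hvar, ← ofReal_variance hf2,
    ← ENNReal.ofReal_natCast, ← ENNReal.ofReal_div_of_pos hcard]
  refine (congrArg ENNReal.ofReal ?_).le
  simp only [inv_pow, Finset.sum_const, Finset.card_univ, nsmul_eq_mul]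
  field_simp

end ChiSquared

section Insertion

variable {X : Type*} [MeasurableSpace X]

theorem measurable_insertNth {N : ℕ} (i : Fin (N + 1)) :
    Measurable fun p : X × (Fin N → X) ↦ (i.insertNth p.1 p.2 : Fin (N + 1) → X) :=
  (MeasurableEquiv.piFinSuccAbove (fun _ ↦ X) i).symm.measurable

theorem measurable_insertNth_uncurry {N : ℕ} :
    Measurable fun q : Fin (N + 1) × X × (Fin N → X) ↦
      (q.1.insertNth q.2.1 q.2.2 : Fin (N + 1) → X) :=
  measurable_from_prod_countable_right fun i ↦ measurable_insertNth i

/-- The kernel that inserts a point into an `N`-tuple at a uniformly random position. -/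
noncomputable def randomInsert (X : Type*) [MeasurableSpace X] (N : ℕ) :
    Kernel (X × (Fin N → X)) (Fin (N + 1) → X) :=
  (Kernel.const _ (uniformOn Set.univ) ×ₖ Kernel.id).map
    fun q : Fin (N + 1) × X × (Fin N → X) ↦ q.1.insertNth q.2.1 q.2.2

instance (N : ℕ) : IsMarkovKernel (randomInsert X N) :=
  have : IsProbabilityMeasure (uniformOn (.univ : Set (Fin (N + 1)))) :=
    isProbabilityMeasure_uniformOn Set.finite_univ Set.univ_nonempty
  Kernel.IsMarkovKernel.map _ measurable_insertNth_uncurry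

theorem randomInsert_apply {N : ℕ} (p : X × (Fin N → X)) {A : Set (Fin (N + 1) → X)}
    (hA : MeasurableSet A) :
    randomInsert X N p A =
      (N + 1 : ℝ≥0∞)⁻¹ * ∑ i : Fin (N + 1), A.indicator 1 (i.insertNth p.1 p.2) := by
  have hU (i : Fin (N + 1)) : uniformOn (.univ : Set (Fin (N + 1))) {i} = (N + 1 : ℝ≥0∞)⁻¹ := by
    simp [uniformOn_univ]
  rw [randomInsert, Kernel.map_apply' _ measurable_insertNth_uncurry _ hA, Kernel.prod_apply,
    Measure.prod_apply (measurable_insertNth_uncurry hA), Kernel.const_apply, Kernel.id_apply,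
    lintegral_fintype, Finset.mul_sum]
  refine Finset.sum_congr rfl fun i _ ↦ ?_
  rw [hU, mul_comm, Measure.dirac_apply' _
    (measurable_prodMk_left (measurable_insertNth_uncurry hA))]
  rfl

theorem randomInsert_comp_apply {N : ℕ} (ρ : Measure (X × (Fin N → X)))
    {A : Set (Fin (N + 1) → X)} (hA : MeasurableSet A) :
    (randomInsert X N ∘ₘ ρ) A =
      (N + 1 : ℝ≥0∞)⁻¹ * ∑ i : Fin (N + 1), ρ.map (fun p ↦ i.insertNth p.1 p.2) A := by
  have hind (i : Fin (N + 1)) :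
      Measurable fun p : X × (Fin N → X) ↦ A.indicator (1 : (Fin (N + 1) → X) → ℝ≥0∞)
        (i.insertNth p.1 p.2) :=
    (measurable_one.indicator hA).comp (measurable_insertNth i)
  rw [Measure.bind_apply hA (Kernel.aemeasurable _)]
  simp_rw [randomInsert_apply _ hA]
  rw [lintegral_const_mul _ (Finset.measurable_sum _ fun i _ ↦ hind i),
    lintegral_finsetSum _ fun i _ ↦ hind i]
  refine congrArg _ (Finset.sum_congr rfl fun i _ ↦ ?_)
  rw [← lintegral_indicator_one hA,
    lintegral_map (measurable_one.indicator hA) (measurable_insertNth i)]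

theorem map_insertNth_prod_pi_withDensity {N : ℕ} (P : Measure X) [SigmaFinite P]
    {f : X → ℝ≥0∞} (hf : Measurable f) (i : Fin (N + 1)) :
    ((P.withDensity f).prod (Measure.pi fun _ ↦ P)).map (fun p ↦ i.insertNth p.1 p.2) =
      (Measure.pi fun _ ↦ P).withDensity fun x ↦ f (x i) := by
  have hpres := (measurePreserving_piFinSuccAbove (fun _ : Fin (N + 1) ↦ P) i).symm
  ext A hA
  rw [Measure.map_apply (measurable_insertNth i) hA, prod_withDensity_left hf,
    withDensity_apply _ (measurable_insertNth i hA), withDensity_apply _ hA]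
  simpa [MeasurableEquiv.piFinSuccAbove, Fin.insertNthEquiv] using
    hpres.setLIntegral_comp_preimage hA (f := fun x ↦ f (x i)) (hf.comp (measurable_pi_apply i))

theorem randomInsert_comp_prod_pi {N : ℕ} (P : Measure X) [SigmaFinite P]
    {f : X → ℝ≥0∞} (hf : Measurable f) :
    randomInsert X N ∘ₘ ((P.withDensity f).prod (Measure.pi fun _ ↦ P)) =
      (Measure.pi fun _ ↦ P).withDensity fun x ↦ (N + 1 : ℝ≥0∞)⁻¹ * ∑ i, f (x i) := by
  have hfi (i : Fin (N + 1)) : Measurable fun x : Fin (N + 1) → X ↦ f (x i) :=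
    hf.comp (measurable_pi_apply i)
  ext A hA
  rw [randomInsert_comp_apply _ hA, withDensity_apply _ hA,
    lintegral_const_mul _ (Finset.measurable_sum _ fun i _ ↦ hfi i),
    lintegral_finsetSum _ fun i _ ↦ hfi i]
  simp_rw [map_insertNth_prod_pi_withDensity P hf, withDensity_apply _ hA]

theorem chiSqDiv_randomInsert_comp_prod_pi_le {N : ℕ} (P Q : Measure X) [IsProbabilityMeasure P]
    [IsProbabilityMeasure Q] :
    chiSqDiv (randomInsert X N ∘ₘ (Q.prod (Measure.pi fun _ ↦ P))) (Measure.pi fun _ ↦ P) ≤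
      chiSqDiv Q P / (N + 1) := by
  by_cases hQP : Q ≪ P
  swap
  · simp [chiSqDiv, hQP, ENNReal.top_div]
  have hr : Measurable (Q.rnDeriv P) := Q.measurable_rnDeriv P
  have hlaw : randomInsert X N ∘ₘ (Q.prod (Measure.pi fun _ ↦ P)) =
      (Measure.pi fun _ ↦ P).withDensity
        fun x ↦ (N + 1 : ℝ≥0∞)⁻¹ * ∑ i, Q.rnDeriv P (x i) := by
    rw [← randomInsert_comp_prod_pi P hr, Measure.withDensity_rnDeriv_eq Q P hQP]
  have : IsProbabilityMeasure ((Measure.pi fun _ ↦ P).withDensity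
      fun x : Fin (N + 1) → X ↦ (N + 1 : ℝ≥0∞)⁻¹ * ∑ i, Q.rnDeriv P (x i)) :=
    hlaw ▸ inferInstance
  have hmean : (fun x : Fin (N + 1) → X ↦
        ((N + 1 : ℝ≥0∞)⁻¹ * ∑ i, Q.rnDeriv P (x i)).toReal) =ᵐ[Measure.pi fun _ ↦ P]
      fun x ↦ (Fintype.card (Fin (N + 1)) : ℝ)⁻¹ * ∑ i, (Q.rnDeriv P (x i)).toReal := by
    have hfin (i : Fin (N + 1)) :
        ∀ᵐ x ∂(Measure.pi fun _ : Fin (N + 1) ↦ P), Q.rnDeriv P (x i) ≠ ⊤ :=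
      (measurePreserving_eval (fun _ : Fin (N + 1) ↦ P) i).quasiMeasurePreserving.ae
        (Q.rnDeriv_ne_top P)
    filter_upwards [ae_all_iff.2 hfin] with x hx
    rw [ENNReal.toReal_mul, ENNReal.toReal_sum fun i _ ↦ hx i, ENNReal.toReal_inv]
    norm_cast
    simp
  rw [hlaw, chiSqDiv_withDensity (by fun_prop), evariance_congr hmean, chiSqDiv_eq_evariance hQP]
  simpa using evariance_sampleMean_pi_le (ι := Fin (N + 1)) (P := P)
    hr.ennreal_toReal.aestronglyMeasurable

end Insertion

section Amplification

variable {X Z : Type*} [MeasurableSpace X] [MeasurableSpace Z]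

/-- The kernel that keeps the state `z`, draws a point from `κ z` and inserts it into the
`N`-tuple at a uniformly random position. -/
noncomputable def insertKernel (κ : Kernel Z X) (N : ℕ) :
    Kernel (Z × (Fin N → X)) (Z × (Fin (N + 1) → X)) :=
  Kernel.deterministic Prod.fst measurable_fst ×ₖ (randomInsert X N ∘ₖ (κ ∥ₖ Kernel.id))

instance (κ : Kernel Z X) [IsMarkovKernel κ] (N : ℕ) : IsMarkovKernel (insertKernel κ N) :=
  inferInstanceAs (IsMarkovKernel (_ ×ₖ _))

theorem deterministic_fst_prod_comp_prod {Y W : Type*} [MeasurableSpace Y] [MeasurableSpace W]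
    (μ : Measure Z) [SFinite μ] (π : Measure Y) [SFinite π] (κ : Kernel (Z × Y) W)
    [IsSFiniteKernel κ] :
    (Kernel.deterministic Prod.fst measurable_fst ×ₖ κ) ∘ₘ (μ.prod π) =
      μ ⊗ₘ (κ ∘ₖ (Kernel.id ×ₖ Kernel.const Z π)) := by
  ext A hA
  have happly (p : Z × Y) : (Kernel.deterministic Prod.fst measurable_fst ×ₖ κ) p A =
      κ p (Prod.mk p.1 ⁻¹' A) :=
    Kernel.deterministic_prod_apply' measurable_fst κ p hA
  have hsection : Measurable fun p : Z × Y ↦ κ p (Prod.mk p.1 ⁻¹' A) := by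
    simpa only [happly] using
      (Kernel.deterministic (Prod.fst : Z × Y → Z) measurable_fst ×ₖ κ).measurable_coe hA
  calc ((Kernel.deterministic Prod.fst measurable_fst ×ₖ κ) ∘ₘ (μ.prod π)) A
      = ∫⁻ p, κ p (Prod.mk p.1 ⁻¹' A) ∂(μ.prod π) := by
        simp_rw [Measure.bind_apply hA (Kernel.aemeasurable _), happly]
    _ = ∫⁻ z, ∫⁻ y, κ (z, y) (Prod.mk z ⁻¹' A) ∂π ∂μ := lintegral_prod _ hsection.aemeasurable
    _ = (μ ⊗ₘ (κ ∘ₖ (Kernel.id ×ₖ Kernel.const Z π))) A := by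
        rw [Measure.compProd_apply hA]
        refine lintegral_congr fun z ↦ ?_
        have hz := measurable_prodMk_left (x := z) hA
        rw [Kernel.comp_apply' _ _ _ hz, Kernel.lintegral_id_prod (κ.measurable_coe hz),
          Kernel.const_apply]

theorem insertKernel_comp_prod (κ : Kernel Z X) [IsSFiniteKernel κ] {N : ℕ} (μ : Measure Z)
    [SFinite μ] (π : Measure (Fin N → X)) [SFinite π] :
    insertKernel κ N ∘ₘ (μ.prod π) =
      μ ⊗ₘ (randomInsert X N ∘ₖ (κ ×ₖ Kernel.const Z π)) := by
  rw [insertKernel, deterministic_fst_prod_comp_prod, Kernel.comp_assoc,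
    Kernel.parallelComp_comp_prod, Kernel.comp_id, Kernel.id_comp]

theorem ofReal_tvDist_insertKernel_sq_le (κ : Kernel Z X) [IsMarkovKernel κ] (N : ℕ)
    (μ : Measure Z) [IsProbabilityMeasure μ] (P : Measure X) [IsProbabilityMeasure P] :
    ENNReal.ofReal (tvDist (insertKernel κ N ∘ₘ (μ.prod (Measure.pi fun _ ↦ P)))
        (μ.prod (Measure.pi fun _ ↦ P)) ^ 2) ≤
      (∫⁻ z, chiSqDiv (κ z) P ∂μ) / (4 * (N + 1)) := by
  set π : (k : ℕ) → Measure (Fin k → X) := fun _ ↦ Measure.pi fun _ ↦ P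
  calc ENNReal.ofReal (tvDist (insertKernel κ N ∘ₘ (μ.prod (π N))) (μ.prod (π (N + 1))) ^ 2)
      = ENNReal.ofReal (tvDist (μ ⊗ₘ (randomInsert X N ∘ₖ (κ ×ₖ Kernel.const Z (π N))))
          (μ ⊗ₘ Kernel.const Z (π (N + 1))) ^ 2) := by
        rw [insertKernel_comp_prod, Measure.compProd_const]
    _ ≤ ∫⁻ z, ENNReal.ofReal
          (tvDist (randomInsert X N ∘ₘ ((κ z).prod (π N))) (π (N + 1)) ^ 2) ∂μ := by
        refine (ofReal_tvDist_compProd_sq_le _ _).trans_eq (lintegral_congr fun z ↦ ?_)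
        rw [Kernel.comp_apply, Kernel.prod_apply, Kernel.const_apply, Kernel.const_apply]
    _ ≤ ∫⁻ z, (4 * (N + 1) : ℝ≥0∞)⁻¹ * chiSqDiv (κ z) P ∂μ := by
        refine lintegral_mono fun z ↦ ofReal_tvDist_sq_le_chiSqDiv.trans ?_
        calc chiSqDiv (randomInsert X N ∘ₘ ((κ z).prod (π N))) (π (N + 1)) / 4
            ≤ chiSqDiv (κ z) P / (N + 1) / 4 :=
              ENNReal.div_le_div_right (chiSqDiv_randomInsert_comp_prod_pi_le P (κ z)) 4
          _ = (4 * (N + 1) : ℝ≥0∞)⁻¹ * chiSqDiv (κ z) P := by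
              rw [ENNReal.mul_inv (by simp) (by simp), div_eq_mul_inv, div_eq_mul_inv]
              ring
    _ = (∫⁻ z, chiSqDiv (κ z) P ∂μ) / (4 * (N + 1)) := by
        rw [lintegral_const_mul' _ _ (by simp), mul_comm, div_eq_mul_inv]

/-- The kernel that inserts `m` independent draws from `κ z` into an `N`-tuple one after another,
each at a uniformly random position, while keeping the state `z`. -/
noncomputable def amplifyKernel (κ : Kernel Z X) (N : ℕ) :
    (m : ℕ) → Kernel (Z × (Fin N → X)) (Z × (Fin (N + m) → X))
  | 0 => Kernel.id
  | m + 1 => insertKernel κ (N + m) ∘ₖ amplifyKernel κ N m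

instance (κ : Kernel Z X) [IsMarkovKernel κ] (N m : ℕ) :
    IsMarkovKernel (amplifyKernel κ N m) := by
  induction m with
  | zero => exact inferInstanceAs (IsMarkovKernel Kernel.id)
  | succ m ih => exact inferInstanceAs (IsMarkovKernel (_ ∘ₖ _))

theorem ofReal_tvDist_amplifyKernel_le (κ : Kernel Z X) [IsMarkovKernel κ] (N m : ℕ)
    (μ : Measure Z) [IsProbabilityMeasure μ] (P : Measure X) [IsProbabilityMeasure P] :
    ENNReal.ofReal (tvDist (amplifyKernel κ N m ∘ₘ (μ.prod (Measure.pi fun _ ↦ P)))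
        (μ.prod (Measure.pi fun _ ↦ P))) ≤
      m * ((∫⁻ z, chiSqDiv (κ z) P ∂μ) / (4 * (N + 1))) ^ (1 / 2 : ℝ) := by
  set ρ : (k : ℕ) → Measure (Z × (Fin k → X)) := fun _ ↦ μ.prod (Measure.pi fun _ ↦ P)
  set B := ((∫⁻ z, chiSqDiv (κ z) P ∂μ) / (4 * (N + 1))) ^ (1 / 2 : ℝ)
  change ENNReal.ofReal (tvDist (amplifyKernel κ N m ∘ₘ ρ N) (ρ (N + m))) ≤ m * B
  induction m with
  | zero =>
    change ENNReal.ofReal (tvDist (Kernel.id ∘ₘ ρ N) (ρ N)) ≤ _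
    simp [Measure.id_comp, tvDist_self]
  | succ m ih =>
    have hstep : ENNReal.ofReal (tvDist (insertKernel κ (N + m) ∘ₘ ρ (N + m)) (ρ (N + m + 1))) ≤
        B := by
      simp only [B]
      rw [one_div, ENNReal.le_rpow_inv_iff (by norm_num), ENNReal.rpow_ofNat,
        ← ENNReal.ofReal_pow (tvDist_nonneg _ _)]
      refine (ofReal_tvDist_insertKernel_sq_le κ (N + m) μ P).trans ?_
      gcongr
      simp
    calc ENNReal.ofReal (tvDist (amplifyKernel κ N (m + 1) ∘ₘ ρ N) (ρ (N + m + 1)))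
        ≤ ENNReal.ofReal (tvDist (insertKernel κ (N + m) ∘ₘ (amplifyKernel κ N m ∘ₘ ρ N))
              (insertKernel κ (N + m) ∘ₘ ρ (N + m)) +
            tvDist (insertKernel κ (N + m) ∘ₘ ρ (N + m)) (ρ (N + m + 1))) := by
          rw [amplifyKernel, ← Measure.comp_assoc]
          exact ENNReal.ofReal_le_ofReal tvDist_triangle
      _ ≤ ENNReal.ofReal (tvDist (amplifyKernel κ N m ∘ₘ ρ N) (ρ (N + m))) +
            ENNReal.ofReal (tvDist (insertKernel κ (N + m) ∘ₘ ρ (N + m)) (ρ (N + m + 1))) := by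
          rw [ENNReal.ofReal_add (tvDist_nonneg _ _) (tvDist_nonneg _ _)]
          gcongr
          exact tvDist_comp_le _
      _ ≤ m * B + B := add_le_add ih hstep
      _ = (m + 1 : ℕ) * B := by push_cast; ring

end Amplification

section MinimaxError

variable {X Θ : Type*} [MeasurableSpace X]

/-- Splits a tuple into the two blocks of coordinates that `e` matches with `ι` and `ι'`. -/
def tupleSplit (X : Type*) [MeasurableSpace X] {ι ι' ι'' : Type*} (e : ι ⊕ ι' ≃ ι'') :
    (ι'' → X) ≃ᵐ (ι → X) × (ι' → X) :=
  (MeasurableEquiv.piCongrLeft (fun _ ↦ X) e).symm.trans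
    (MeasurableEquiv.sumPiEquivProdPi fun _ ↦ X)

theorem measurePreserving_tupleSplit {ι ι' ι'' : Type*} [Fintype ι] [Fintype ι'] [Fintype ι'']
    (e : ι ⊕ ι' ≃ ι'') (P : Measure X) [SigmaFinite P] :
    MeasurePreserving (tupleSplit X e) (Measure.pi fun _ ↦ P)
      ((Measure.pi fun _ ↦ P).prod (Measure.pi fun _ ↦ P)) :=
  (measurePreserving_sumPiEquivProdPi fun _ ↦ P).comp
    (measurePreserving_piCongrLeft (fun _ ↦ P) e).symm

theorem ofReal_ampErr_le (P : Θ → Measure X) {n m : ℕ} {B : ℝ≥0∞}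
    (T : Kernel (Fin n → X) (Fin (n + m) → X)) [hT : IsMarkovKernel T]
    (h : ∀ θ, ENNReal.ofReal (tvDist (Measure.pi fun _ ↦ P θ)
      (T ∘ₘ (Measure.pi fun _ ↦ P θ))) ≤ B) :
    ENNReal.ofReal (ampErr P n m) ≤ B := by
  obtain rfl | hB := eq_or_ne B ⊤
  · exact le_top
  refine ENNReal.ofReal_le_of_le_toReal (ciInf_le_of_le ⟨0, ?_⟩ ⟨T, hT⟩ (Real.iSup_le
    (fun θ ↦ (ENNReal.ofReal_le_iff_le_toReal hB).1 (h θ)) ENNReal.toReal_nonneg))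
  rintro _ ⟨S, rfl⟩
  exact Real.iSup_nonneg fun θ ↦ tvDist_nonneg _ _

theorem ofReal_ampErr_add_le_of_kernel (P : Θ → Measure X) [∀ θ, IsProbabilityMeasure (P θ)]
    (k l m : ℕ) (κ : Kernel (Fin k → X) X) [IsMarkovKernel κ] :
    ENNReal.ofReal (ampErr P (k + l) m) ≤
      m * ((⨆ θ, ∫⁻ x, chiSqDiv (κ x) (P θ) ∂(Measure.pi fun _ ↦ P θ)) /
        (4 * (l + 1))) ^ (1 / 2 : ℝ) := by
  let split := tupleSplit X (finSumFinEquiv (m := k) (n := l))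
  let split' := tupleSplit X
    ((finSumFinEquiv (m := k) (n := l + m)).trans (finCongr (Nat.add_assoc k l m).symm))
  let merge := Kernel.deterministic split'.symm split'.symm.measurable
  refine ofReal_ampErr_le P
    (merge ∘ₖ (amplifyKernel κ l m ∘ₖ Kernel.deterministic split split.measurable)) fun θ ↦ ?_
  let π (j : ℕ) : Measure (Fin j → X) := Measure.pi fun _ ↦ P θ
  have hsplit : Kernel.deterministic split split.measurable ∘ₘ π (k + l) = (π k).prod (π l) := by
    rw [Measure.deterministic_comp_eq_map]
    exact (measurePreserving_tupleSplit _ (P θ)).map_eq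
  have hmerge : π (k + l + m) = merge ∘ₘ ((π k).prod (π (l + m))) := by
    rw [Measure.deterministic_comp_eq_map]
    exact ((measurePreserving_tupleSplit _ (P θ)).symm.map_eq).symm
  change ENNReal.ofReal (tvDist (π (k + l + m)) (_ ∘ₘ π (k + l))) ≤ _
  rw [← Measure.comp_assoc, ← Measure.comp_assoc, hsplit, hmerge]
  calc ENNReal.ofReal (tvDist (merge ∘ₘ ((π k).prod (π (l + m))))
        (merge ∘ₘ (amplifyKernel κ l m ∘ₘ ((π k).prod (π l)))))
      ≤ ENNReal.ofReal (tvDist ((π k).prod (π (l + m)))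
          (amplifyKernel κ l m ∘ₘ ((π k).prod (π l)))) :=
        ENNReal.ofReal_le_ofReal (tvDist_comp_le merge)
    _ ≤ m * ((∫⁻ x, chiSqDiv (κ x) (P θ) ∂π k) / (4 * (l + 1))) ^ (1 / 2 : ℝ) := by
        rw [tvDist_comm]
        exact ofReal_tvDist_amplifyKernel_le κ l m (π k) (P θ)
    _ ≤ _ := by
        gcongr
        exact le_iSup (fun θ ↦ ∫⁻ x, chiSqDiv (κ x) (P θ) ∂(Measure.pi fun _ ↦ P θ)) θ

theorem ofReal_ampErr_add_le (P : Θ → Measure X) [∀ θ, IsProbabilityMeasure (P θ)]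
    (k l m : ℕ) :
    ENNReal.ofReal (ampErr P (k + l) m) ≤
      m * (chiSqRisk P k / (4 * (l + 1))) ^ (1 / 2 : ℝ) := by
  obtain _ | ⟨⟨θ⟩⟩ := isEmpty_or_nonempty Θ
  · simp [ampErr, Real.iInf_const_zero]
  have : Nonempty {κ : Kernel (Fin k → X) X // IsMarkovKernel κ} :=
    ⟨Kernel.const _ (P θ), inferInstance⟩
  have hmono : Monotone fun r : ℝ≥0∞ ↦ m * (r / (4 * (l + 1))) ^ (1 / 2 : ℝ) :=
    fun r s hrs ↦ by dsimp only; gcongr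
  have hcont : Continuous fun r : ℝ≥0∞ ↦ m * (r / (4 * (l + 1))) ^ (1 / 2 : ℝ) :=
    (ENNReal.continuous_const_mul (ENNReal.natCast_ne_top m)).comp
      (ENNReal.continuous_rpow_const.comp (ENNReal.continuous_div_const _ (by simp)))
  rw [chiSqRisk, hmono.map_ciInf_of_continuousAt hcont.continuousAt]
  exact le_iInf fun ⟨κ, _⟩ ↦ ofReal_ampErr_add_le_of_kernel P k l m κ

end MinimaxError

theorem ampErr_le_sqrt_chiSqRisk_general {X Θ : Type*} [MeasurableSpace X] (P : Θ → Measure X)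
    [∀ θ, IsProbabilityMeasure (P θ)] (n m : ℕ) :
    ENNReal.ofReal (ampErr P n m) ≤
      ((m : ℝ≥0∞) ^ 2 / n * chiSqRisk P (n / 2)) ^ (1 / 2 : ℝ) := by
  have hsize : (n : ℝ≥0∞) ≤ 4 * ((n - n / 2 : ℕ) + 1) :=
    mod_cast (by lia : n ≤ 4 * (n - n / 2 + 1))
  calc ENNReal.ofReal (ampErr P n m)
      = ENNReal.ofReal (ampErr P (n / 2 + (n - n / 2)) m) := by
        rw [Nat.add_sub_cancel' (Nat.div_le_self n 2)]
    _ ≤ m * (chiSqRisk P (n / 2) / (4 * ((n - n / 2 : ℕ) + 1))) ^ (1 / 2 : ℝ) :=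
        ofReal_ampErr_add_le P _ _ m
    _ ≤ m * (chiSqRisk P (n / 2) / n) ^ (1 / 2 : ℝ) := by gcongr
    _ = ((m : ℝ≥0∞) ^ 2 / n * chiSqRisk P (n / 2)) ^ (1 / 2 : ℝ) := by
        rw [ENNReal.mul_comm_div, ENNReal.mul_rpow_of_nonneg _ _ (by norm_num),
          ← ENNReal.rpow_natCast_mul]
        simp

/-- Amplification via learning: general classes.
For any class of probability distributions, any even `n ≥ 2` and any `m ≥ 0`,
`ε*(𝒫, n, m) ≤ sqrt((m²/n) · r_{χ²}(𝒫, n/2))`. -/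
theorem ampErr_le_sqrt_chiSqRisk
    {X Θ : Type*} [MeasurableSpace X] (P : Θ → Measure X)
    (hP : ∀ θ, IsProbabilityMeasure (P θ))
    (n m : ℕ) (hn : 2 ≤ n) (hev : Even n) :
    ENNReal.ofReal (ampErr P n m) ≤
      ((m : ℝ≥0∞) ^ 2 / (n : ℝ≥0∞) * chiSqRisk P (n / 2)) ^ ((1 : ℝ) / 2) :=
  ampErr_le_sqrt_chiSqRisk_general P n m
end

section
/- Let P and Q be probability distributions on a measurable space 𝒳, let X_1,…,X_n be i.i.d. samples from P and Y_1,…,Y_m be i.i.d. samples from Q, independent of (X_1,…,X_n). Let (Z_1,…,Z_{n+m}) be obtained by applying a uniformly random permutation of [n+m] to the concatenated tuple (X_1,…,X_n,Y_1,…,Y_m), and let P_mix denote the law of (Z_1,…,Z_{n+m}) on 𝒳^{n+m}. Then χ²(P_mix ‖ P^{⊗(n+m)}) ≤ (1 + (m/(n+m))·χ²(Q‖P))^m − 1. -/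
open MeasureTheory ProbabilityTheory
open scoped ENNReal NNReal Classical

/-- The law of a uniformly random permutation applied to the concatenation of `n`
i.i.d. samples from `P` (the first `n` coordinates) and `m` i.i.d. samples from `Q`
(the last `m` coordinates), all independent. -/
noncomputable def shuffleMix {X : Type*} [MeasurableSpace X] (P Q : Measure X)
    (n m : ℕ) : Measure (Fin (n + m) → X) :=
  (((n + m).factorial : ℝ≥0∞))⁻¹ •
    ∑ σ : Equiv.Perm (Fin (n + m)),
      Measure.map (fun x => x ∘ σ)
        (Measure.pi fun i : Fin (n + m) => if (i : ℕ) < n then P else Q)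

/-!
Let `N = n + m`, let `f = dQ/dP`, and let `S` be the set of coordinates sampled from `Q`. With
respect to the exchangeable law `P^{⊗N}` the unshuffled tuple has density `G x = ∏ i ∈ S, f (x i)`,
and the shuffled tuple has the average of `x ↦ G (x ∘ σ)` over all permutations `σ`. This averaging
is an orthogonal projection in `L²`, so the squared norm of the new density is
`E_σ ∫ G (x ∘ σ) G x = E_σ (1 + χ²(Q‖P)) ^ #(σ(S) ∩ S)`. The exponent is hypergeometric, and the
generating function of that law at `1 + c` is at most the binomial one: expanding in powers of `c`,
the coefficients compare by `Pr(σ(T) ⊆ S) = C(#S, #T) / C(N, #T) ≤ (#S / N) ^ #T`.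
-/

open scoped Finset
open Equiv (Perm)

section Permutations

theorem choose_mul_pow_le_choose_mul_pow {a b : ℕ} (hab : a ≤ b) (t : ℕ) :
    a.choose t * b ^ t ≤ b.choose t * a ^ t := by
  induction t with
  | zero => simp
  | succ t ih =>
    have hstep : (a - t) * b ≤ (b - t) * a := by
      rw [Nat.sub_mul, Nat.sub_mul, mul_comm b a]
      exact Nat.sub_le_sub_left (Nat.mul_le_mul_left t hab) _
    refine Nat.le_of_mul_le_mul_right ?_ t.succ_pos
    calc a.choose (t + 1) * b ^ (t + 1) * (t + 1)
        = (a.choose t * b ^ t) * ((a - t) * b) := by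
          rw [mul_right_comm, Nat.choose_succ_right_eq]; ring
      _ ≤ (b.choose t * a ^ t) * ((b - t) * a) := Nat.mul_le_mul ih hstep
      _ = b.choose (t + 1) * a ^ (t + 1) * (t + 1) := by
          rw [mul_right_comm _ _ (t + 1), Nat.choose_succ_right_eq]; ring

variable {ι : Type*} [DecidableEq ι]

theorem one_add_pow_card_filter_mem {R : Type*} [CommSemiring R] (σ : Perm ι) (A S : Finset ι)
    (c : R) :
    (1 + c) ^ #{i ∈ A | σ i ∈ S} =
      ∑ T ∈ A.powerset, if T.map σ.toEmbedding ⊆ S then c ^ #T else 0 := by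
  rw [← Finset.prod_const, Finset.prod_one_add, ← Finset.sum_filter]
  refine Finset.sum_congr ?_ fun T _ => Finset.prod_const c
  ext T
  simp only [Finset.mem_powerset, Finset.mem_filter, Finset.subset_iff, Finset.forall_mem_map,
    Equiv.coe_toEmbedding]
  grind

variable [Fintype ι]

theorem card_perm_map_subset_congr {T U : Finset ι} (S : Finset ι) (h : #T = #U) :
    #{σ : Perm ι | T.map σ.toEmbedding ⊆ S} = #{σ : Perm ι | U.map σ.toEmbedding ⊆ S} := by
  obtain ⟨π, rfl⟩ := Perm.exists_map_finset_eq T U h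
  refine Finset.card_equiv (Equiv.mulRight π⁻¹) fun σ => ?_
  have hσ : π.toEmbedding.trans (Equiv.mulRight π⁻¹ σ).toEmbedding = σ.toEmbedding := by
    ext x
    simp
  simp only [Finset.mem_filter_univ, Finset.map_map, hσ]

-- Double counting of the pairs `(U, σ)` with `#U = #T` and `σ(U) ⊆ S`.
theorem choose_mul_card_perm_map_subset (S T : Finset ι) :
    (Fintype.card ι).choose #T * #{σ : Perm ι | T.map σ.toEmbedding ⊆ S} =
      (Fintype.card ι).factorial * (#S).choose #T := by
  have hU : ∀ U ∈ Finset.univ.powersetCard #T,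
      #{σ : Perm ι | U.map σ.toEmbedding ⊆ S} = #{σ : Perm ι | T.map σ.toEmbedding ⊆ S} :=
    fun U hU => card_perm_map_subset_congr S (Finset.mem_powersetCard.1 hU).2
  have hσ : ∀ σ : Perm ι,
      #{U ∈ Finset.univ.powersetCard #T | U.map σ.toEmbedding ⊆ S} = (#S).choose #T := by
    intro σ
    rw [← Finset.card_powersetCard]
    refine Finset.card_equiv σ.finsetCongr fun U => ?_
    simp [Finset.mem_powersetCard, and_comm]
  have hcount := Finset.sum_card_bipartiteAbove_eq_sum_card_bipartiteBelow
    (s := Finset.univ.powersetCard #T) (t := (Finset.univ : Finset (Perm ι)))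
    fun U σ => U.map σ.toEmbedding ⊆ S
  simp only [Finset.bipartiteAbove, Finset.bipartiteBelow] at hcount
  rw [Finset.sum_congr rfl hU] at hcount
  simpa [hσ, Fintype.card_perm] using hcount

theorem card_perm_map_subset_mul_pow_le (S T : Finset ι) :
    #{σ : Perm ι | T.map σ.toEmbedding ⊆ S} * Fintype.card ι ^ #T ≤
      (Fintype.card ι).factorial * #S ^ #T := by
  have hpos : 0 < (Fintype.card ι).choose #T := Nat.choose_pos T.card_le_univ
  refine Nat.le_of_mul_le_mul_left ?_ hpos
  rw [← mul_assoc, choose_mul_card_perm_map_subset, mul_assoc, mul_left_comm _ (Nat.factorial _)]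
  exact Nat.mul_le_mul_left _ (choose_mul_pow_le_choose_mul_pow S.card_le_univ _)

theorem card_perm_map_subset_le (S T : Finset ι) :
    (#{σ : Perm ι | T.map σ.toEmbedding ⊆ S} : ℝ≥0∞) ≤
      (Fintype.card ι).factorial * ((#S : ℝ≥0∞) / Fintype.card ι) ^ #T := by
  have hne : Fintype.card ι ^ #T ≠ 0 := by
    have := T.card_le_univ
    rw [Ne, pow_eq_zero_iff']
    lia
  rw [div_eq_mul_inv, mul_pow, ← ENNReal.inv_pow, ← mul_assoc, ← div_eq_mul_inv,
    ENNReal.le_div_iff_mul_le (.inl (mod_cast hne)) (.inl (by finiteness))]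
  exact_mod_cast card_perm_map_subset_mul_pow_le S T

-- The generating functions at `1 + c` of the hypergeometric law of `#{i ∈ A | σ i ∈ S}` and of the
-- binomial law with the same mean.
theorem sum_perm_one_add_pow_card_filter_mem_le (A S : Finset ι) (c : ℝ≥0∞) :
    ((Fintype.card ι).factorial : ℝ≥0∞)⁻¹ * ∑ σ : Perm ι, (1 + c) ^ #{i ∈ A | σ i ∈ S} ≤
      (1 + (#S : ℝ≥0∞) / Fintype.card ι * c) ^ #A := by
  rw [ENNReal.inv_mul_le_iff (mod_cast Nat.factorial_ne_zero _) (by finiteness)]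
  simp_rw [one_add_pow_card_filter_mem]
  rw [Finset.sum_comm, ← Finset.prod_const, Finset.prod_one_add, Finset.mul_sum]
  refine Finset.sum_le_sum fun T _ => ?_
  rw [← Finset.sum_filter, Finset.sum_const, nsmul_eq_mul, Finset.prod_const, mul_pow, ← mul_assoc]
  gcongr
  exact card_perm_map_subset_le S T

end Permutations

section Density

variable {Ω : Type*} [MeasurableSpace Ω]

theorem map_withDensity_comp {Ω' : Type*} [MeasurableSpace Ω'] {μ : Measure Ω} {ν : Measure Ω'}
    {φ : Ω → Ω'} (hφ : MeasurePreserving φ μ ν) {g : Ω' → ℝ≥0∞} (hg : Measurable g) :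
    (μ.withDensity (g ∘ φ)).map φ = ν.withDensity g := by
  ext s hs
  rw [Measure.map_apply hφ.measurable hs, withDensity_apply _ (hφ.measurable hs),
    withDensity_apply _ hs]
  exact hφ.setLIntegral_comp_preimage hs hg

theorem withDensity_finsetSum {κ : Type*} (μ : Measure Ω) (s : Finset κ) {f : κ → Ω → ℝ≥0∞}
    (hf : ∀ k, Measurable (f k)) :
    μ.withDensity (fun x => ∑ k ∈ s, f k x) = ∑ k ∈ s, μ.withDensity (f k) := by
  ext t ht
  simp only [withDensity_apply _ ht, lintegral_finsetSum _ fun k _ => hf k,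
    Measure.finsetSum_apply]

theorem isProbabilityMeasure_withDensity {μ : Measure Ω} {f : Ω → ℝ≥0∞}
    (hf : ∫⁻ x, f x ∂μ = 1) : IsProbabilityMeasure (μ.withDensity f) :=
  ⟨by rw [withDensity_apply _ .univ, Measure.restrict_univ, hf]⟩

theorem ofReal_toReal_sub_one_sq_add_two_mul {a : ℝ≥0∞} (ha : a ≠ ∞) :
    ENNReal.ofReal ((a.toReal - 1) ^ 2) + 2 * a = a ^ 2 + 1 := by
  lift a to ℝ≥0 using ha
  rw [← ENNReal.toReal_eq_toReal_iff' (by finiteness) (by finiteness),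
    ENNReal.toReal_add (by finiteness) (by finiteness),
    ENNReal.toReal_add (by finiteness) (by finiteness), ENNReal.toReal_ofReal (sq_nonneg _)]
  simp only [ENNReal.toReal_mul, ENNReal.toReal_pow, ENNReal.coe_toReal, ENNReal.toReal_ofNat,
    ENNReal.toReal_one]
  ring

theorem one_add_chiSqDiv_withDensity (P : Measure Ω) [IsProbabilityMeasure P] {f : Ω → ℝ≥0∞}
    (hf : Measurable f) (hf1 : ∫⁻ x, f x ∂P = 1) :
    1 + chiSqDiv (P.withDensity f) P = ∫⁻ x, f x ^ 2 ∂P := by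
  rw [chiSqDiv, if_pos (withDensity_absolutelyContinuous _ _)]
  have hexpand : ∀ᵐ x ∂P,
      ENNReal.ofReal ((((P.withDensity f).rnDeriv P x).toReal - 1) ^ 2) + 2 * f x =
        f x ^ 2 + 1 := by
    filter_upwards [Measure.rnDeriv_withDensity P hf, ae_lt_top hf (by simp [hf1])] with x hx hfx
    rw [hx, ofReal_toReal_sub_one_sq_add_two_mul hfx.ne]
  have hint := lintegral_congr_ae hexpand
  rw [lintegral_add_right _ (by fun_prop), lintegral_add_right _ (by fun_prop),
    lintegral_const_mul _ hf, hf1, lintegral_one, measure_univ, mul_one,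
    show (2 : ℝ≥0∞) = 1 + 1 from one_add_one_eq_two.symm, ← add_assoc] at hint
  rw [add_comm]
  exact (ENNReal.add_left_inj ENNReal.one_ne_top).1 hint

end Density

section Product

variable {ι : Type*} [Fintype ι] {X : ι → Type*} [∀ i, MeasurableSpace (X i)]
  (μ : ∀ i, Measure (X i)) [∀ i, IsProbabilityMeasure (μ i)] {f : ∀ i, X i → ℝ≥0∞}

theorem lintegral_pi_prod (S : Finset ι) (hf : ∀ i, Measurable (f i)) :
    ∫⁻ x, ∏ i ∈ S, f i (x i) ∂Measure.pi μ = ∏ i ∈ S, ∫⁻ y, f i y ∂μ i := by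
  rw [lintegral_prod_eq_prod_lintegral_of_indepFun S (fun i (x : ∀ i, X i) => f i (x i))
    (iIndepFun_pi fun i => (hf i).aemeasurable) fun i => (hf i).comp (measurable_pi_apply i)]
  exact Finset.prod_congr rfl fun i _ => (measurePreserving_eval μ i).lintegral_comp (hf i)

theorem pi_withDensity (hf : ∀ i, Measurable (f i))
    [∀ i, SigmaFinite ((μ i).withDensity (f i))] :
    Measure.pi (fun i => (μ i).withDensity (f i)) =
      (Measure.pi μ).withDensity fun x => ∏ i, f i (x i) := by
  refine Measure.pi_eq fun s hs => ?_
  have hindicator : (Set.univ.pi s).indicator (fun x => ∏ i, f i (x i)) =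
      fun x => ∏ i, (s i).indicator (f i) (x i) := by
    ext x
    simp only [Set.indicator_apply, Finset.prod_ite_zero, Set.mem_univ_pi, Finset.mem_univ,
      true_imp_iff]
  rw [withDensity_apply _ (.univ_pi hs), ← lintegral_indicator (.univ_pi hs), hindicator,
    lintegral_pi_prod μ _ fun i => (hf i).indicator (hs i)]
  exact Finset.prod_congr rfl fun i _ => by
    rw [lintegral_indicator (hs i), withDensity_apply _ (hs i)]

variable [DecidableEq ι]

theorem pi_ite_withDensity (S : Finset ι) (hf : ∀ i, Measurable (f i))
    (hf1 : ∀ i, ∫⁻ y, f i y ∂μ i = 1) :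
    Measure.pi (fun i => if i ∈ S then (μ i).withDensity (f i) else μ i) =
      (Measure.pi μ).withDensity fun x => ∏ i ∈ S, f i (x i) := by
  have hite : ∀ i, (if i ∈ S then (μ i).withDensity (f i) else μ i) =
      (μ i).withDensity (if i ∈ S then f i else 1) := by
    intro i
    split_ifs
    exacts [rfl, withDensity_one.symm]
  have hprob : ∀ i, IsProbabilityMeasure ((μ i).withDensity (if i ∈ S then f i else 1)) := by
    intro i
    split_ifs
    exacts [isProbabilityMeasure_withDensity (hf1 i), by rw [withDensity_one]; infer_instance]
  have hmeas : ∀ i, Measurable (if i ∈ S then f i else 1) := by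
    intro i
    split_ifs
    exacts [hf i, measurable_one]
  simp only [hite]
  rw [pi_withDensity μ hmeas]
  simp only [ite_apply, Pi.one_apply, Finset.prod_ite_mem, Finset.univ_inter]

theorem lintegral_pi_prod_mul_prod (S T : Finset ι) (hf : ∀ i, Measurable (f i))
    (hf1 : ∀ i, ∫⁻ y, f i y ∂μ i = 1) :
    ∫⁻ x, (∏ i ∈ S, f i (x i)) * ∏ i ∈ T, f i (x i) ∂Measure.pi μ =
      ∏ i ∈ S ∩ T, ∫⁻ y, f i y ^ 2 ∂μ i := by
  have hinter : (S ∪ T) ∩ (S ∩ T) = S ∩ T :=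
    Finset.inter_eq_right.2 Finset.inter_subset_union
  have hsplit : ∀ x : ∀ i, X i, (∏ i ∈ S, f i (x i)) * ∏ i ∈ T, f i (x i) =
      ∏ i ∈ S ∪ T, f i (x i) ^ (if i ∈ S ∩ T then 2 else 1) := by
    intro x
    rw [← Finset.prod_union_inter, ← hinter, ← Finset.prod_ite_mem, ← Finset.prod_mul_distrib,
      hinter]
    refine Finset.prod_congr rfl fun i _ => ?_
    split_ifs <;> simp [sq]
  calc ∫⁻ x, (∏ i ∈ S, f i (x i)) * ∏ i ∈ T, f i (x i) ∂Measure.pi μ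
      = ∏ i ∈ S ∪ T, ∫⁻ y, f i y ^ (if i ∈ S ∩ T then 2 else 1) ∂μ i := by
        simp only [hsplit]
        exact lintegral_pi_prod μ (f := fun i y => f i y ^ (if i ∈ S ∩ T then 2 else 1)) _
          fun i => (hf i).pow_const _
    _ = ∏ i ∈ S ∪ T, if i ∈ S ∩ T then ∫⁻ y, f i y ^ 2 ∂μ i else 1 := by
        refine Finset.prod_congr rfl fun i _ => ?_
        split_ifs <;> simp [hf1]
    _ = ∏ i ∈ S ∩ T, ∫⁻ y, f i y ^ 2 ∂μ i := by rw [Finset.prod_ite_mem, hinter]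

end Product

section Exchangeable

variable {ι X : Type*} [MeasurableSpace X]

/-- The law of a tuple is exchangeable if it is invariant under all permutations of the
coordinates. -/
def IsExchangeable (ν : Measure (ι → X)) : Prop :=
  ∀ σ : Perm ι, MeasurePreserving (fun x : ι → X => x ∘ σ) ν ν

theorem isExchangeable_pi [Fintype ι] (P : Measure X) [SigmaFinite P] :
    IsExchangeable (Measure.pi fun _ : ι => P) := by
  intro σ
  convert measurePreserving_piCongrLeft (fun _ => P) σ.symm using 1
  ext x i
  simp [MeasurableEquiv.coe_piCongrLeft, Equiv.piCongrLeft_apply_eq_cast]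

theorem measurable_comp_perm {G : (ι → X) → ℝ≥0∞} (hG : Measurable G) (σ : Perm ι) :
    Measurable fun x : ι → X => G (x ∘ σ) :=
  hG.comp (by fun_prop)

theorem IsExchangeable.map_withDensity {ν : Measure (ι → X)} (hν : IsExchangeable ν)
    {G : (ι → X) → ℝ≥0∞} (hG : Measurable G) (σ : Perm ι) :
    (ν.withDensity G).map (fun x => x ∘ σ) = ν.withDensity fun x => G (x ∘ σ.symm) := by
  rw [← map_withDensity_comp (hν σ) (measurable_comp_perm hG σ.symm)]
  simp [Function.comp_def]

end Exchangeable

section Shuffle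

variable {ι X : Type*} [Fintype ι] [DecidableEq ι]

/-- The average of a function of a tuple over all rearrangements of the tuple. -/
noncomputable def permAverage (G : (ι → X) → ℝ≥0∞) (x : ι → X) : ℝ≥0∞ :=
  ((Fintype.card ι).factorial : ℝ≥0∞)⁻¹ * ∑ σ : Perm ι, G (x ∘ σ)

theorem permAverage_comp_perm (G : (ι → X) → ℝ≥0∞) (x : ι → X) (τ : Perm ι) :
    permAverage G (x ∘ τ) = permAverage G x := by
  unfold permAverage
  rw [← Equiv.sum_comp (Equiv.mulLeft τ) fun σ : Perm ι => G (x ∘ σ)]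
  rfl

variable [MeasurableSpace X]

/-- The law of a uniformly random permutation of a tuple with law `μ`, the permutation being
independent of the tuple. -/
noncomputable def uniformShuffle (μ : Measure (ι → X)) : Measure (ι → X) :=
  ((Fintype.card ι).factorial : ℝ≥0∞)⁻¹ • ∑ σ : Perm ι, μ.map fun x => x ∘ σ

theorem measurable_permAverage {G : (ι → X) → ℝ≥0∞} (hG : Measurable G) :
    Measurable (permAverage G) :=
  (Finset.measurable_sum _ fun σ _ => measurable_comp_perm hG σ).const_mul _

namespace IsExchangeable

variable {ν : Measure (ι → X)} {F G : (ι → X) → ℝ≥0∞}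

theorem uniformShuffle_withDensity (hν : IsExchangeable ν) (hG : Measurable G) :
    uniformShuffle (ν.withDensity G) = ν.withDensity (permAverage G) := by
  refine Eq.trans ?_ (withDensity_smul _
    (Finset.measurable_sum _ fun σ _ => measurable_comp_perm hG σ)).symm
  rw [withDensity_finsetSum _ _ (measurable_comp_perm hG), uniformShuffle,
    ← Equiv.sum_comp (Equiv.inv (Perm ι))]
  simp only [hν.map_withDensity hG]
  rfl

theorem lintegral_mul_permAverage (hν : IsExchangeable ν) (hF : Measurable F)
    (hF_symm : ∀ (x : ι → X) (σ : Perm ι), F (x ∘ σ) = F x) (hG : Measurable G) :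
    ∫⁻ x, F x * permAverage G x ∂ν = ∫⁻ x, F x * G x ∂ν := by
  have hσ : ∀ σ : Perm ι, ∫⁻ x, F x * G (x ∘ σ) ∂ν = ∫⁻ x, F x * G x ∂ν := by
    intro σ
    simpa only [Pi.mul_apply, hF_symm] using (hν σ).lintegral_comp (hF.mul hG)
  have hmeas : ∀ σ : Perm ι, Measurable fun x => F x * G (x ∘ σ) :=
    fun σ => hF.mul (measurable_comp_perm hG σ)
  have hexpand : ∀ x, F x * permAverage G x =
      ((Fintype.card ι).factorial : ℝ≥0∞)⁻¹ * ∑ σ : Perm ι, F x * G (x ∘ σ) := by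
    intro x
    rw [permAverage, mul_left_comm, Finset.mul_sum]
  simp only [hexpand]
  rw [lintegral_const_mul _ (Finset.measurable_sum _ fun σ _ => hmeas σ),
    lintegral_finsetSum _ fun σ _ => hmeas σ]
  simp only [hσ, Finset.sum_const, Finset.card_univ, Fintype.card_perm, nsmul_eq_mul]
  exact ENNReal.inv_mul_cancel_left (mod_cast Nat.factorial_ne_zero _) (by finiteness)

theorem lintegral_permAverage (hν : IsExchangeable ν) (hG : Measurable G) :
    ∫⁻ x, permAverage G x ∂ν = ∫⁻ x, G x ∂ν := by
  simpa using hν.lintegral_mul_permAverage (F := 1) measurable_one (fun _ _ => rfl) hG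

theorem lintegral_permAverage_sq (hν : IsExchangeable ν) (hG : Measurable G) :
    ∫⁻ x, permAverage G x ^ 2 ∂ν =
      ((Fintype.card ι).factorial : ℝ≥0∞)⁻¹ * ∑ σ : Perm ι, ∫⁻ x, G (x ∘ σ) * G x ∂ν := by
  have hmeas : ∀ σ : Perm ι, Measurable fun x => G (x ∘ σ) * G x :=
    fun σ => (measurable_comp_perm hG σ).mul hG
  simp only [sq]
  rw [hν.lintegral_mul_permAverage (measurable_permAverage hG) (permAverage_comp_perm G) hG,
    ← lintegral_finsetSum _ fun σ _ => hmeas σ,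
    ← lintegral_const_mul _ (Finset.measurable_sum _ fun σ _ => hmeas σ)]
  simp only [permAverage, mul_assoc, Finset.sum_mul]

theorem one_add_chiSqDiv_uniformShuffle_withDensity [IsProbabilityMeasure ν]
    (hν : IsExchangeable ν) (hG : Measurable G) (hG1 : ∫⁻ x, G x ∂ν = 1) :
    1 + chiSqDiv (uniformShuffle (ν.withDensity G)) ν =
      ((Fintype.card ι).factorial : ℝ≥0∞)⁻¹ * ∑ σ : Perm ι, ∫⁻ x, G (x ∘ σ) * G x ∂ν := by
  rw [hν.uniformShuffle_withDensity hG, one_add_chiSqDiv_withDensity ν (measurable_permAverage hG)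
    ((hν.lintegral_permAverage hG).trans hG1), hν.lintegral_permAverage_sq hG]

end IsExchangeable

theorem lintegral_prod_comp_perm_mul_prod (P : Measure X) [IsProbabilityMeasure P] {f : X → ℝ≥0∞}
    (hf : Measurable f) (hf1 : ∫⁻ y, f y ∂P = 1) (S : Finset ι) (σ : Perm ι) :
    ∫⁻ x, (∏ i ∈ S, f ((x ∘ σ) i)) * ∏ i ∈ S, f (x i) ∂(Measure.pi fun _ => P) =
      (∫⁻ y, f y ^ 2 ∂P) ^ #{i ∈ S | σ i ∈ S} := by
  have hmap : ∀ x : ι → X, ∏ i ∈ S, f ((x ∘ σ) i) = ∏ i ∈ S.map σ.toEmbedding, f (x i) :=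
    fun x => (Finset.prod_map S σ.toEmbedding fun i => f (x i)).symm
  have hcard : #(S.map σ.toEmbedding ∩ S) = #{i ∈ S | σ i ∈ S} := by
    rw [← Finset.filter_mem_eq_inter, Finset.filter_map, Finset.card_map]
    rfl
  simp only [hmap]
  rw [lintegral_pi_prod_mul_prod (fun _ => P) _ _ (fun _ => hf) (fun _ => hf1), Finset.prod_const,
    hcard]

theorem one_add_chiSqDiv_uniformShuffle_pi_eq {P Q : Measure X} [IsProbabilityMeasure P]
    [IsProbabilityMeasure Q] (hQP : Q ≪ P) (S : Finset ι) :
    1 + chiSqDiv (uniformShuffle (Measure.pi fun i => if i ∈ S then Q else P))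
        (Measure.pi fun _ => P) =
      ((Fintype.card ι).factorial : ℝ≥0∞)⁻¹ *
        ∑ σ : Perm ι, (1 + chiSqDiv Q P) ^ #{i ∈ S | σ i ∈ S} := by
  obtain ⟨f, hf, hf1, rfl⟩ : ∃ f, Measurable f ∧ ∫⁻ y, f y ∂P = 1 ∧ P.withDensity f = Q :=
    ⟨Q.rnDeriv P, Measure.measurable_rnDeriv Q P,
      by rw [Measure.lintegral_rnDeriv hQP, measure_univ], Measure.withDensity_rnDeriv_eq Q P hQP⟩
  have hG : Measurable fun x : ι → X => ∏ i ∈ S, f (x i) := by fun_prop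
  have hG1 : ∫⁻ x, ∏ i ∈ S, f (x i) ∂(Measure.pi fun _ : ι => P) = 1 := by
    rw [lintegral_pi_prod (fun _ => P) S fun _ => hf]
    exact Finset.prod_eq_one fun _ _ => hf1
  rw [pi_ite_withDensity (fun _ => P) S (fun _ => hf) fun _ => hf1,
    (isExchangeable_pi P).one_add_chiSqDiv_uniformShuffle_withDensity hG hG1,
    one_add_chiSqDiv_withDensity P hf hf1]
  simp only [lintegral_prod_comp_perm_mul_prod P hf hf1]

theorem one_add_chiSqDiv_uniformShuffle_pi_le (P Q : Measure X) [IsProbabilityMeasure P]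
    [IsProbabilityMeasure Q] (S : Finset ι) :
    1 + chiSqDiv (uniformShuffle (Measure.pi fun i => if i ∈ S then Q else P))
        (Measure.pi fun _ => P) ≤
      (1 + (#S : ℝ≥0∞) / Fintype.card ι * chiSqDiv Q P) ^ #S := by
  by_cases hQP : Q ≪ P
  · rw [one_add_chiSqDiv_uniformShuffle_pi_eq hQP]
    exact sum_perm_one_add_pow_card_filter_mem_le S S _
  obtain rfl | hS := S.eq_empty_or_nonempty
  · simpa [Fintype.card_perm, ENNReal.inv_mul_cancel, Nat.factorial_ne_zero] using
      (one_add_chiSqDiv_uniformShuffle_pi_eq (ι := ι) (Measure.AbsolutelyContinuous.refl P) ∅).le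
  · have hratio : (#S : ℝ≥0∞) / Fintype.card ι ≠ 0 := by simp [hS.ne_empty]
    rw [chiSqDiv, chiSqDiv, if_neg hQP, ENNReal.mul_top hratio, add_top,
      ENNReal.top_pow hS.card_ne_zero]
    exact le_top

theorem shuffleMix_eq_uniformShuffle (P Q : Measure X) (n m : ℕ) :
    shuffleMix P Q n m = uniformShuffle (Measure.pi fun i : Fin (n + m) =>
      if i ∈ ({i | n ≤ (i : ℕ)} : Finset (Fin (n + m))) then Q else P) := by
  have hite : ∀ i : Fin (n + m), (if (i : ℕ) < n then P else Q) =
      if i ∈ ({i | n ≤ (i : ℕ)} : Finset (Fin (n + m))) then Q else P := by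
    intro i
    simp only [Finset.mem_filter_univ, ← not_lt, ite_not]
  simp only [shuffleMix, uniformShuffle, hite, Fintype.card_fin]

end Shuffle

/-- Key lemma for the shuffling approach.
If `Z = (Z_1, …, Z_{n+m})` is a uniformly random shuffle of `n` i.i.d. samples from
`P` and `m` i.i.d. samples from `Q` (independent of each other), then
`χ²(P_mix ‖ P^{⊗(n+m)}) ≤ (1 + (m/(n+m))·χ²(Q‖P))^m − 1`. -/
theorem chiSq_shuffleMix_le
    {X : Type*} [MeasurableSpace X] (P Q : Measure X)
    (hP : IsProbabilityMeasure P) (hQ : IsProbabilityMeasure Q)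
    (n m : ℕ) (hn : 1 ≤ n) :
    chiSqDiv (shuffleMix P Q n m) (Measure.pi fun _ : Fin (n + m) => P) ≤
      (1 + ((m : ℝ≥0∞) / ((n : ℝ≥0∞) + (m : ℝ≥0∞))) * chiSqDiv Q P) ^ m - 1 := by
  have hcard : #({i | n ≤ (i : ℕ)} : Finset (Fin (n + m))) = m := by
    have h := Finset.card_filter_add_card_filter_not (s := (Finset.univ : Finset (Fin (n + m))))
      fun i => (i : ℕ) < n
    simpa [Fin.card_filter_val_lt] using h
  refine ENNReal.le_sub_of_add_le_left ENNReal.one_ne_top ?_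
  rw [shuffleMix_eq_uniformShuffle]
  simpa only [hcard, Fintype.card_fin, Nat.cast_add] using
    one_add_chiSqDiv_uniformShuffle_pi_le P Q ({i | n ≤ (i : ℕ)} : Finset (Fin (n + m)))
end
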